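/- Let T₁,…,T_s be s-tensors on ℝ^n such that: (i) for every multi-index (i₁,…,i_s), whenever i_p = i_q one has T_p^{i₁…i_s} = T_q^{i₁…i_s}; and (ii) whenever the entries of (i₁,…,i_s) are pairwise distinct, T_l^{i₁…i_s} = 0 for all l. Then Σ_{σ ∈ P^{s-1}} Σ_{l=1}^{s} sign(σ_{(l)}) · Diag^{σ_{(l)}} T_l = 0, where the outer sum is over all permutations σ on {1,…,s−1}. -/

import Mathlib

open scoped BigOperators
open Filter Asymptotics Matrix

attribute [local instance] Matrix.normedAddCommGroup

noncomputable section

/-- A `k`-tensor on `ℝ^n`, identified with its array of entries. -/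
abbrev Tensor (k n : ℕ) : Type := (Fin k → Fin n) → ℝ

/-- A `2k`-tensor on `ℝ^n`, with its indices grouped into two groups of `k`. -/
abbrev Tensor2 (k n : ℕ) : Type := (Fin k → Fin n) → (Fin k → Fin n) → ℝ

/-- The `σ`-Hadamard product of `k` matrices:
`(H₁ ∘_σ ⋯ ∘_σ H_k)^{i₁…i_k} = ∏ s, H_s^{i_s i_{σ⁻¹(s)}}`. -/
def hadamardProd {k n : ℕ} (σ : Equiv.Perm (Fin k))
    (H : Fin k → Matrix (Fin n) (Fin n) ℝ) : Tensor k n :=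
  fun i => ∏ s, H s (i s) (i (σ⁻¹ s))

/-- The dot product of two `k`-tensors. -/
def tdot {k n : ℕ} (T₁ T₂ : Tensor k n) : ℝ :=
  ∑ p : Fin k → Fin n, T₁ p * T₂ p

/-- `Diag^σ T`, the `2k`-tensor equal to `T^{i₁…i_k}` when `i_s = j_{σ(s)}` for all `s`,
and `0` otherwise. -/
def diagPerm {k n : ℕ} (σ : Equiv.Perm (Fin k)) (T : Tensor k n) : Tensor2 k n :=
  fun i j => if ∀ s, i s = j (σ s) then T i else 0

/-- A `2k`-tensor viewed as a `k`-tensor on matrix arguments: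
`S[H₁,…,H_k] = ∑_{p,q} S^{p₁…p_k}_{q₁…q_k} ∏ s, H_s^{p_s q_s}`. -/
def apply2 {k n : ℕ} (S : Tensor2 k n)
    (H : Fin k → Matrix (Fin n) (Fin n) ℝ) : ℝ :=
  ∑ p : Fin k → Fin n, ∑ q : Fin k → Fin n, S p q * ∏ s, H s (p s) (q s)

/-- Conjugation `U S Uᵀ` of a `2k`-tensor `S` by a matrix `U`. -/
def conj2 {k n : ℕ} (U : Matrix (Fin n) (Fin n) ℝ) (S : Tensor2 k n) : Tensor2 k n :=
  fun i j => ∑ p : Fin k → Fin n, ∑ q : Fin k → Fin n,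
    S p q * ((∏ s, U (i s) (p s)) * ∏ s, U (j s) (q s))

/-- For a `2(k+1)`-tensor `S` viewed as a `(k+1)`-tensor on matrices, `S[H]` fixes the last
matrix argument to `H`, producing a `2k`-tensor. -/
def lastApply {k n : ℕ} (S : Tensor2 (k+1) n)
    (H : Matrix (Fin n) (Fin n) ℝ) : Tensor2 k n :=
  fun i j => ∑ a : Fin n, ∑ b : Fin n, S (Fin.snoc i a) (Fin.snoc j b) * H a b

/-- `T[x]`: contraction of the last index of a `(k+1)`-tensor against a vector. -/
def contract {k n : ℕ} (T : Tensor (k+1) n) (x : Fin n → ℝ) : Tensor k n :=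
  fun i => ∑ a : Fin n, T (Fin.snoc i a) * x a

/-- A permutation `σ` of `{1,…,k}` viewed as a permutation of `{1,…,k+1}` fixing `k+1`. -/
def extPerm {k : ℕ} (σ : Equiv.Perm (Fin k)) : Equiv.Perm (Fin (k+1)) :=
  (Equiv.permCongr finSuccEquivLast).symm σ.optionCongr

/-- `σ_{(l)} := σ ∘ τ_l`, where `τ_l` is the transposition `(l, k+1)` (and `σ` fixes `k+1`).
Here `l : Fin (k+1)`; taking `l = Fin.last k` gives `σ_{(k+1)} = σ`. -/
def permIns {k : ℕ} (σ : Equiv.Perm (Fin k)) (l : Fin (k+1)) : Equiv.Perm (Fin (k+1)) :=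
  extPerm σ * Equiv.swap l (Fin.last k)

/-- A tensor is `μ`-block-constant if its entries agree on componentwise `μ`-equivalent
multi-indices (`i ∼ j` iff `μ i = μ j`). -/
def BlockConstant {k n : ℕ} (μ : Fin n → ℝ) (T : Tensor k n) : Prop :=
  ∀ i j : Fin k → Fin n, (∀ s, μ (i s) = μ (j s)) → T i = T j

/-- `H_in`: the diagonal-block part of `H` (w.r.t. the blocks of `μ`). -/
def matIn {n : ℕ} (μ : Fin n → ℝ) (H : Matrix (Fin n) (Fin n) ℝ) :
    Matrix (Fin n) (Fin n) ℝ :=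
  Matrix.of fun i j => if μ i = μ j then H i j else 0

/-- `H_out = H - H_in`: the off-diagonal-block part of `H`. -/
def matOut {n : ℕ} (μ : Fin n → ℝ) (H : Matrix (Fin n) (Fin n) ℝ) :
    Matrix (Fin n) (Fin n) ℝ :=
  H - matIn μ H

/-- The divided-difference tensor `T^{(l)}_out` of a `k`-tensor `T`, a `(k+1)`-tensor. -/
def outDD {k n : ℕ} (μ : Fin n → ℝ) (T : Tensor k n) (l : Fin k) : Tensor (k+1) n :=
  fun i => if μ (i l.castSucc) = μ (i (Fin.last k)) then 0
    else (T (Function.update (fun s => i s.castSucc) l (i (Fin.last k)))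
          - T (fun s => i s.castSucc)) / (μ (i (Fin.last k)) - μ (i l.castSucc))

/-- `T^{τ_l}`: the `(k+1)`-tensor equal to `T^{i₁…i_k}` on the hyperplane `i_l = i_{k+1}`
and `0` elsewhere. -/
def liftTau {k n : ℕ} (T : Tensor k n) (l : Fin k) : Tensor (k+1) n :=
  fun i => if i l.castSucc = i (Fin.last k) then T (fun s => i s.castSucc) else 0

/-- `T^{τ_l}_in`: the "inflated" `(k+1)`-tensor, equal to
`T^{i₁…i_{l-1} i_{k+1} i_{l+1}…i_k}` when `μ_{i_l} = μ_{i_{k+1}}` and `0` otherwise. -/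
def liftTauIn {k n : ℕ} (μ : Fin n → ℝ) (T : Tensor k n) (l : Fin k) : Tensor (k+1) n :=
  fun i => if μ (i l.castSucc) = μ (i (Fin.last k))
    then T (Function.update (fun s => i s.castSucc) l (i (Fin.last k))) else 0

/-- `lam` is the map sending each symmetric matrix to the vector of its eigenvalues
ordered nonincreasingly: it is nonincreasing and realized by an orthogonal
diagonalization. -/
def IsEigCF {n : ℕ} (lam : Matrix (Fin n) (Fin n) ℝ → Fin n → ℝ) : Prop :=
  ∀ A : Matrix (Fin n) (Fin n) ℝ, A.IsSymm →
    Antitone (lam A) ∧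
    ∃ U : Matrix (Fin n) (Fin n) ℝ, Uᵀ * U = 1 ∧
      A = U * Matrix.diagonal (lam A) * Uᵀ

/-- `h` is the concatenated vector `(λ(X₁ᵀ A X₁), …, λ(X_rᵀ A X_r))` of the nonincreasingly
ordered eigenvalues of the diagonal blocks of `A` (blocks determined by `μ`):
equivalently, `h` is nonincreasing within each block of `μ` and `Diag h` is obtained from
`A_in` by conjugating with a block-diagonal orthogonal matrix. -/
def IsBlockEig {n : ℕ} (μ : Fin n → ℝ) (A : Matrix (Fin n) (Fin n) ℝ)
    (h : Fin n → ℝ) : Prop :=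
  (∀ i j : Fin n, i ≤ j → μ i = μ j → h j ≤ h i) ∧
  ∃ V : Matrix (Fin n) (Fin n) ℝ, Vᵀ * V = 1 ∧
    (∀ i j, μ i ≠ μ j → V i j = 0) ∧
    Vᵀ * matIn μ A * V = Matrix.diagonal h

/-!
Every permutation `π` of `{1,…,s}` is `σ_{(l)}` for a unique pair `(σ, l)`, and `l = π⁻¹(s)`. So
the `(i, j)` entry of the double sum is the sum, over the permutations `π` with `i = j ∘ π`, of
`sign π` times the `i` entry of `T_{π⁻¹(s)}`. If `i a = i b` with `a ≠ b`, then `π ↦ π ∘ (a b)`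
reverses the sign of each term and preserves everything else, by hypothesis (i), so the terms
cancel in pairs.
-/

theorem extPerm_last {k : ℕ} (σ : Equiv.Perm (Fin k)) :
    extPerm σ (Fin.last k) = Fin.last k := by
  simp [extPerm, Equiv.permCongr]

theorem extPerm_injective {k : ℕ} : Function.Injective (extPerm (k := k)) :=
  (Equiv.permCongr finSuccEquivLast).symm.injective.comp Equiv.optionCongr_injective

theorem permIns_symm_last {k : ℕ} (σ : Equiv.Perm (Fin k)) (l : Fin (k + 1)) :
    (permIns σ l).symm (Fin.last k) = l := by
  simp [Equiv.symm_apply_eq, permIns, extPerm_last]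

theorem permIns_bijective {k : ℕ} :
    Function.Bijective fun x : Equiv.Perm (Fin k) × Fin (k + 1) => permIns x.1 x.2 := by
  refine (Fintype.bijective_iff_injective_and_card _).2 ⟨?_, ?_⟩
  · rintro ⟨σ, l⟩ ⟨τ, m⟩ (h : permIns σ l = permIns τ m)
    obtain rfl : l = m := by rw [← permIns_symm_last σ l, h, permIns_symm_last]
    rw [extPerm_injective (mul_right_cancel h)]
  · simp [Fintype.card_perm, Nat.factorial_succ, mul_comm]

theorem sum_permIns {M : Type*} [AddCommMonoid M] {k : ℕ}
    (f : Equiv.Perm (Fin (k + 1)) → Fin (k + 1) → M) :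
    ∑ σ : Equiv.Perm (Fin k), ∑ l, f (permIns σ l) l = ∑ π, f π (π.symm (Fin.last k)) := by
  rw [← Fintype.sum_prod_type']
  exact Fintype.sum_bijective _ permIns_bijective _ _ fun x => by rw [permIns_symm_last]

section SignedSum

variable {ι M : Type*} [Fintype ι] [DecidableEq ι] [AddCommGroup M]

theorem sum_sign_smul_eq_zero_of_mul_swap {f : Equiv.Perm ι → M} {a b : ι} (hab : a ≠ b)
    (hf : ∀ π, f (π * Equiv.swap a b) = f π) :
    ∑ π : Equiv.Perm ι, Equiv.Perm.sign π • f π = 0 :=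
  Finset.sum_involution (fun π _ => π * Equiv.swap a b)
    (fun π _ => by simp [hf, Equiv.Perm.sign_swap hab])
    (fun _ _ _ => (not_congr Equiv.mul_swap_eq_iff).2 hab)
    (fun _ _ => Finset.mem_univ _)
    (fun π _ => Equiv.mul_swap_involutive a b π)

theorem sum_sign_smul_ite_eq_zero_of_not_injective {α : Type*} {i : ι → α}
    (hi : ¬Function.Injective i) (j : ι → α) [∀ π : Equiv.Perm ι, Decidable (∀ s, i s = j (π s))]
    {v : ι → M} (hv : ∀ a b, i a = i b → v a = v b) (c : ι) :
    ∑ π : Equiv.Perm ι,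
      Equiv.Perm.sign π • (if ∀ s, i s = j (π s) then v (π.symm c) else 0) = 0 := by
  obtain ⟨a, b, hiab, hab⟩ := Function.not_injective_iff.1 hi
  have i_swap (s : ι) : i (Equiv.swap a b s) = i s := Equiv.apply_swap_eq_self hiab s
  refine sum_sign_smul_eq_zero_of_mul_swap hab fun π => ?_
  have match_iff : (∀ s, i s = j ((π * Equiv.swap a b) s)) ↔ ∀ s, i s = j (π s) := by
    rw [← (Equiv.swap a b).forall_congr_right]
    simp only [i_swap, Equiv.Perm.mul_apply, Equiv.swap_apply_self]
  have v_eq : v ((π * Equiv.swap a b).symm c) = v (π.symm c) := hv _ _ (i_swap _)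
  simp only [match_iff, v_eq]

end SignedSum

theorem statement17_general {α M : Type*} [DecidableEq α] [AddCommGroup M] {k : ℕ}
    (T : Fin (k + 1) → (Fin (k + 1) → α) → M)
    (h1 : ∀ (p : Fin (k + 1) → α) (a b : Fin (k + 1)), p a = p b → T a p = T b p)
    (h2 : ∀ p : Fin (k + 1) → α, Function.Injective p → ∀ l, T l p = 0)
    (i j : Fin (k + 1) → α) :
    ∑ σ : Equiv.Perm (Fin k), ∑ l : Fin (k + 1),
      Equiv.Perm.sign (permIns σ l) • (if ∀ s, i s = j (permIns σ l s) then T l i else 0) = 0 := by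
  rw [sum_permIns fun π l => Equiv.Perm.sign π • if ∀ s, i s = j (π s) then T l i else 0]
  by_cases hi : Function.Injective i
  · simp only [h2 i hi, ite_self, smul_zero, Finset.sum_const_zero]
  · exact sum_sign_smul_ite_eq_zero_of_not_injective hi j (h1 i) (Fin.last k)

/-- Proposition `k-p`. Here the paper's `s` equals `k+1`. Let
`T₁,…,T_{k+1}` be `(k+1)`-tensors such that (i) for every multi-index `p`,
`(T₁^p,…,T_{k+1}^p) ⪯ p` (i.e. `p_a = p_b` implies `T_a^p = T_b^p`), and (ii) `T_l^p = 0`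
for all `l` whenever `p` has pairwise distinct entries. Then
`∑_{σ ∈ P^{s-1}} ∑_{l=1}^{s} sign(σ_{(l)}) Diag^{σ_{(l)}} T_l = 0`. -/
theorem statement17 {n k : ℕ} (T : Fin (k+1) → Tensor (k+1) n)
    (h1 : ∀ (p : Fin (k+1) → Fin n) (a b : Fin (k+1)), p a = p b → T a p = T b p)
    (h2 : ∀ p : Fin (k+1) → Fin n, Function.Injective p → ∀ l, T l p = 0) :
    ∑ σ : Equiv.Perm (Fin k), ∑ l : Fin (k+1),
        ((Equiv.Perm.sign (permIns σ l) : ℤ) • diagPerm (permIns σ l) (T l))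
      = (0 : Tensor2 (k+1) n) := by
  ext i j
  simpa only [Finset.sum_apply] using! statement17_general T h1 h2 i j

end
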